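/- If f″ is essentially bounded on [a,b], then | (1/4)·[(b−x)(x−a−h(b−a)/2)² − (x−a)(x−b+h(b−a)/2)²]·f′(x) − (1/2)·[(b−x)(x−a−h(b−a)/2) − (x−a)(x−b+h(b−a)/2)]·f(x) − (h(b−a)/4)·[(b−x)f(a) + (x−a)f(b)] + (h²(b−a)²/16)·[(x−a)f′(b) − (b−x)f′(a)] + (1/2)·[(b−x) − (x−a)]·F(x) + (1/2)(x−a) | ≤ (‖f″‖_∞/12)·[ (b−x)·{(x−a−h(b−a)/2)³ + (h(b−a)/2)³} + (x−a)·{(b−h(b−a)/2−x)³ + (h(b−a)/2)³} ], where ‖f″‖_∞ denotes the essential supremum of |f″| on [a,b]. -/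

import Mathlib

open MeasureTheory intervalIntegral

/-!
Two integrations by parts express the integral of `f''` against the kernel `(t - α) ^ 2 / 2` through
the values of `f`, `f'` at the endpoints and `∫ f`. The quantity to be bounded is the combination,
with weights `(b - x) / 2` and `(x - a) / 2`, of these identities on `[a, x]` with node
`α = a + h (b - a) / 2` and on `[x, b]` with node `β = b - h (b - a) / 2`. Since the kernels are
nonnegative, a bound `K` on `|f''|` factors out of both integrals.
-/

section Primitive

variable {a b : ℝ}

theorem absolutelyContinuousOnInterval_of_eqOn {X : Type*} [PseudoMetricSpace X] {f g : ℝ → X}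
    (hf : AbsolutelyContinuousOnInterval f a b) (hfg : Set.EqOn f g (Set.uIcc a b)) :
    AbsolutelyContinuousOnInterval g a b := by
  rw [absolutelyContinuousOnInterval_iff] at hf ⊢
  intro ε hε
  obtain ⟨δ, hδ, hfδ⟩ := hf ε hε
  refine ⟨δ, hδ, fun E hE hlength ↦ ?_⟩
  rw [← Finset.sum_congr rfl fun i hi ↦
    congrArg₂ dist (hfg (hE.1 i hi).1) (hfg (hE.1 i hi).2)]
  exact hfδ E hE hlength

theorem absolutelyContinuousOnInterval_of_eq_add_integral {f f' : ℝ → ℝ}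
    (hf' : IntervalIntegrable f' volume a b)
    (hf : ∀ t ∈ Set.uIcc a b, f t = f a + ∫ u in a..t, f' u) :
    AbsolutelyContinuousOnInterval f a b := by
  have hconst : AbsolutelyContinuousOnInterval (fun _ ↦ f a) a b :=
    contDiffOn_const.absolutelyContinuousOnInterval
  exact absolutelyContinuousOnInterval_of_eqOn
    (hconst.add (hf'.absolutelyContinuousOnInterval_intervalIntegral Set.left_mem_uIcc))
    fun t ht ↦ (hf t ht).symm

theorem ae_hasDerivAt_of_eq_add_integral {E : Type*} [NormedAddCommGroup E] [NormedSpace ℝ E]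
    [CompleteSpace E] {f f' : ℝ → E} (hf' : IntervalIntegrable f' volume a b)
    (hf : ∀ t ∈ Set.uIcc a b, f t = f a + ∫ u in a..t, f' u) :
    ∀ᵐ t, t ∈ Set.uIcc a b → HasDerivAt f (f' t) t := by
  filter_upwards [hf'.ae_hasDerivAt_integral, volume.ae_ne a, volume.ae_ne b]
    with t hderiv hta htb ht
  have hnhds : Set.uIcc a b ∈ nhds t :=
    Icc_mem_nhds (ht.1.lt_of_ne (by grind)) (ht.2.lt_of_ne (by grind))
  exact ((hderiv ht a Set.left_mem_uIcc).const_add (f a)).congr_of_eventuallyEq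
    (Filter.mem_of_superset hnhds hf)

end Primitive

section QuadraticKernel

variable {c d : ℝ}

theorem integral_half_sq_sub_mul_deriv {f f' : ℝ → ℝ}
    (hf : ∀ t ∈ Set.uIcc c d, HasDerivWithinAt f (f' t) (Set.uIcc c d) t)
    (hf' : AbsolutelyContinuousOnInterval f' c d) (α : ℝ) :
    ∫ t in c..d, (t - α) ^ 2 / 2 * deriv f' t =
      (d - α) ^ 2 / 2 * f' d - (c - α) ^ 2 / 2 * f' c - ((d - α) * f d - (c - α) * f c)
        + ∫ t in c..d, f t := by
  have hkernel (t : ℝ) : HasDerivAt (fun t ↦ (t - α) ^ 2 / 2) (t - α) t := by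
    simpa using (((hasDerivAt_id t).sub_const α).pow 2).div_const 2
  have hkernel_ac : AbsolutelyContinuousOnInterval (fun t ↦ (t - α) ^ 2 / 2) c d :=
    ContDiffOn.absolutelyContinuousOnInterval (by fun_prop)
  have hfirst : ∫ t in c..d, (t - α) ^ 2 / 2 * deriv f' t =
      (d - α) ^ 2 / 2 * f' d - (c - α) ^ 2 / 2 * f' c - ∫ t in c..d, (t - α) * f' t := by
    simpa only [(hkernel _).deriv] using hkernel_ac.integral_mul_deriv_eq_deriv_mul hf'
  have hsecond : ∫ t in c..d, (t - α) * f' t =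
      (d - α) * f d - (c - α) * f c - ∫ t in c..d, f t := by
    simpa only [one_mul] using integral_mul_deriv_eq_deriv_mul_of_hasDerivWithinAt
      (fun t _ ↦ ((hasDerivAt_id' t).sub_const α).hasDerivWithinAt) hf
      intervalIntegrable_const hf'.continuousOn.intervalIntegrable
  rw [hfirst, hsecond]
  ring

theorem integral_half_sq_sub (α : ℝ) :
    ∫ t in c..d, (t - α) ^ 2 / 2 = ((d - α) ^ 3 - (c - α) ^ 3) / 6 := by
  rw [intervalIntegral.integral_div, integral_comp_sub_right (fun t ↦ t ^ 2), integral_pow]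
  ring

theorem norm_integral_half_sq_sub_smul_le {E : Type*} [NormedAddCommGroup E] [NormedSpace ℝ E]
    {g : ℝ → E} {K : ℝ} (hcd : c ≤ d) (hg : ∀ᵐ t, t ∈ Set.uIcc c d → ‖g t‖ ≤ K) (α : ℝ) :
    ‖∫ t in c..d, ((t - α) ^ 2 / 2) • g t‖ ≤ K / 6 * ((d - α) ^ 3 - (c - α) ^ 3) := by
  calc
    _ ≤ ∫ t in c..d, (t - α) ^ 2 / 2 * K := by
      refine norm_integral_le_of_norm_le hcd ?_
        (Continuous.intervalIntegrable (by fun_prop) _ _)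
      filter_upwards [hg] with t hgt ht
      rw [norm_smul, Real.norm_of_nonneg (by positivity)]
      gcongr
      exact hgt (Set.Icc_subset_uIcc (Set.Ioc_subset_Icc_self ht))
    _ = K / 6 * ((d - α) ^ 3 - (c - α) ^ 3) := by
      rw [intervalIntegral.integral_mul_const, integral_half_sq_sub]
      ring

end QuadraticKernel

theorem stmt_18_general {a b x K : ℝ} {f f' : ℝ → ℝ} (hx : x ∈ Set.Icc a b)
    (hf : ∀ t ∈ Set.Icc a b, HasDerivWithinAt f (f' t) (Set.Icc a b) t)
    (hf' : AbsolutelyContinuousOnInterval f' a b)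
    (hK : ∀ᵐ t, t ∈ Set.Icc a b → |deriv f' t| ≤ K) (α β : ℝ) :
    |(1 / 4) * ((b - x) * (x - α) ^ 2 - (x - a) * (x - β) ^ 2) * f' x
      - (1 / 2) * ((b - x) * (x - α) - (x - a) * (x - β)) * f x
      - (1 / 2) * ((b - x) * (α - a) * f a + (x - a) * (b - β) * f b)
      + (1 / 4) * ((x - a) * (b - β) ^ 2 * f' b - (b - x) * (α - a) ^ 2 * f' a)
      + (1 / 2) * ((b - x) - (x - a)) * (∫ u in a..x, f u)
      + (1 / 2) * (x - a) * ∫ u in a..b, f u| ≤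
      (K / 12) * ((b - x) * ((x - α) ^ 3 + (α - a) ^ 3)
        + (x - a) * ((β - x) ^ 3 + (b - β) ^ 3)) := by
  obtain ⟨hax, hxb⟩ := hx
  rw [← Set.uIcc_of_le (hax.trans hxb)] at hf hK
  have hx : x ∈ Set.uIcc a b := Set.Icc_subset_uIcc ⟨hax, hxb⟩
  have hleft : Set.uIcc a x ⊆ Set.uIcc a b := Set.uIcc_subset_uIcc_left hx
  have hright : Set.uIcc x b ⊆ Set.uIcc a b := Set.uIcc_subset_uIcc_right hx
  have hsplit : (∫ u in a..x, f u) + ∫ u in x..b, f u = ∫ u in a..b, f u :=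
    integral_add_adjacent_intervals
      ((HasDerivWithinAt.continuousOn hf).mono hleft).intervalIntegrable
      ((HasDerivWithinAt.continuousOn hf).mono hright).intervalIntegrable
  have hI := integral_half_sq_sub_mul_deriv
    (fun t ht ↦ (hf t (hleft ht)).mono hleft) (hf'.mono hleft) α
  have hJ := integral_half_sq_sub_mul_deriv
    (fun t ht ↦ (hf t (hright ht)).mono hright) (hf'.mono hright) β
  set I := ∫ t in a..x, (t - α) ^ 2 / 2 * deriv f' t
  set J := ∫ t in x..b, (t - β) ^ 2 / 2 * deriv f' t
  have hI_le : |I| ≤ K / 6 * ((x - α) ^ 3 - (a - α) ^ 3) :=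
    norm_integral_half_sq_sub_smul_le (g := deriv f') hax
      (hK.mono fun t ht htx ↦ ht (hleft htx)) α
  have hJ_le : |J| ≤ K / 6 * ((b - β) ^ 3 - (x - β) ^ 3) :=
    norm_integral_half_sq_sub_smul_le (g := deriv f') hxb
      (hK.mono fun t ht htx ↦ ht (hright htx)) β
  calc
    _ = |(b - x) / 2 * I + (x - a) / 2 * J| := by
      rw [hI, hJ, ← hsplit]
      ring_nf
    _ ≤ (b - x) / 2 * |I| + (x - a) / 2 * |J| := by
      grw [abs_add_le]
      rw [abs_mul, abs_mul, abs_of_nonneg (by linarith : 0 ≤ (b - x) / 2),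
        abs_of_nonneg (by linarith : 0 ≤ (x - a) / 2)]
    _ ≤ (b - x) / 2 * (K / 6 * ((x - α) ^ 3 - (a - α) ^ 3))
        + (x - a) / 2 * (K / 6 * ((b - β) ^ 3 - (x - β) ^ 3)) := by
      gcongr
    _ = _ := by ring

theorem stmt_18 (a b h x : ℝ) (f f' f'' : ℝ → ℝ)
    (hab : a < b)
    (hh : h ∈ Set.Icc (0 : ℝ) 1)
    (hax : a < x) (hxb : x < b)
    (hx1 : a + h * (b - a) / 2 ≤ x) (hx2 : x ≤ b - h * (b - a) / 2)
    (hfpos : ∀ t ∈ Set.Icc a b, 0 ≤ f t)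
    (hpdf : (∫ u in a..b, f u) = 1)
    (hfd : ∀ t ∈ Set.Icc a b, HasDerivAt f (f' t) t)
    (hf''int : IntervalIntegrable f'' MeasureTheory.volume a b)
    (hac : ∀ t ∈ Set.Icc a b, f' t = f' a + ∫ u in a..t, f'' u)
    (K : ℝ) (hK : ∀ᵐ t ∂MeasureTheory.volume.restrict (Set.Icc a b), |f'' t| ≤ K)
    :
    |(1 / 4) * ((b - x) * (x - a - h * (b - a) / 2) ^ 2
          - (x - a) * (x - b + h * (b - a) / 2) ^ 2) * f' x
      - (1 / 2) * ((b - x) * (x - a - h * (b - a) / 2)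
          - (x - a) * (x - b + h * (b - a) / 2)) * f x
      - (h * (b - a) / 4) * ((b - x) * f a + (x - a) * f b)
      + (h ^ 2 * (b - a) ^ 2 / 16) * ((x - a) * f' b - (b - x) * f' a)
      + (1 / 2) * ((b - x) - (x - a)) * (∫ u in a..x, f u) + (1 / 2) * (x - a)| ≤
      (K / 12) *
        ((b - x) * ((x - a - h * (b - a) / 2) ^ 3 + (h * (b - a) / 2) ^ 3)
          + (x - a) * ((b - h * (b - a) / 2 - x) ^ 3 + (h * (b - a) / 2) ^ 3)) := by
  have huIcc := Set.uIcc_of_le hab.le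
  have hf'_ac := absolutelyContinuousOnInterval_of_eq_add_integral hf''int (huIcc ▸ hac)
  have hf'_deriv := huIcc ▸ ae_hasDerivAt_of_eq_add_integral hf''int (huIcc ▸ hac)
  have hbound : ∀ᵐ t, t ∈ Set.Icc a b → |deriv f' t| ≤ K := by
    filter_upwards [hf'_deriv, (ae_restrict_iff' measurableSet_Icc).1 hK] with t hderiv hle ht
    exact (hderiv ht).deriv ▸ hle ht
  have hgeneral := stmt_18_general ⟨hax.le, hxb.le⟩ (fun t ht ↦ (hfd t ht).hasDerivWithinAt)
    hf'_ac hbound (a + h * (b - a) / 2) (b - h * (b - a) / 2)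
  rw [hpdf] at hgeneral
  convert hgeneral using 2 <;> ring
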